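/- arXiv:2009.07180 — 3 statements merged into one kernel-verified Lean document; each statement's English description precedes it below -/
import Mathlib

section
/- Let t be a prime number and let m be a natural number with m < t. Let V_m be the (m+1)-dimensional 𝔽_t-vector space of homogeneous polynomials of degree m in two variables X, Y over 𝔽_t = ℤ/tℤ, on which SL₂(𝔽_t) acts 𝔽_t-linearly by substitution: the matrix with rows (a, b) and (c, d) sends a polynomial f(X, Y) to f(aX + cY, bX + dY). Then this representation is irreducible: the only SL₂(𝔽_t)-stable 𝔽_t-subspaces of V_m are 0 and V_m. -/
open MvPolynomial

lemma vdm_aux {t : ℕ} (ht : t.Prime) (m : ℕ) (hm : m < t) {M : Type*} [AddCommGroup M]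
    [Module (ZMod t) M] (U : Submodule (ZMod t) M) (v : ℕ → M)
    (h : ∀ s : ZMod t, ∑ j ∈ Finset.range (m+1), s ^ j • v j ∈ U) :
    ∀ j ≤ m, v j ∈ U := by
  haveI := Fact.mk ht
  intro j hj
  by_contra hv
  obtain ⟨φ, hφ, hk⟩ := Submodule.exists_le_ker_of_notMem hv
  let p : Polynomial (ZMod t) := ∑ j ∈ Finset.range (m+1), Polynomial.C (φ (v j)) * Polynomial.X ^ j
  have hp : p = 0 := by
    refine Polynomial.eq_zero_of_natDegree_lt_card_of_eval_eq_zero p (f := fun s : ZMod t => s)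
      Function.injective_id ?_ ?_
    · intro s
      have := hk (h s)
      simp only [LinearMap.mem_ker, map_sum, map_smul, smul_eq_mul] at this
      simp only [p, Polynomial.eval_finset_sum, Polynomial.eval_mul, Polynomial.eval_C,
        Polynomial.eval_pow, Polynomial.eval_X]
      rw [← this]
      exact Finset.sum_congr rfl fun i _ => mul_comm _ _
    · rw [ZMod.card]
      refine lt_of_le_of_lt (Polynomial.natDegree_sum_le_of_forall_le _ _ (n := m) ?_) hm
      intro i hi
      exact (Polynomial.natDegree_C_mul_X_pow_le _ _).trans (by simpa [Nat.lt_succ_iff] using hi)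
  apply hφ
  have := congrArg (fun q => Polynomial.coeff q j) hp
  simpa [p, Polynomial.finset_sum_coeff, Polynomial.coeff_C_mul, Polynomial.coeff_X_pow,
    Nat.lt_succ_iff, hj] using this

lemma repr_aux {t : ℕ} (m : ℕ) (f : MvPolynomial (Fin 2) (ZMod t))
    (hf : f ∈ homogeneousSubmodule (Fin 2) (ZMod t) m) :
    ∃ c : ℕ → ZMod t, f = ∑ k ∈ Finset.range (m+1),
      c k • ((X 0 : MvPolynomial (Fin 2) (ZMod t)) ^ (m-k) * X 1 ^ k) := by
  rw [mem_homogeneousSubmodule] at hf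
  have : f ∈ Submodule.span (ZMod t) (Set.range (fun k : Fin (m+1) =>
      (X 0 : MvPolynomial (Fin 2) (ZMod t)) ^ (m-k.1) * X 1 ^ k.1)) := by
    rw [f.as_sum]
    refine Submodule.sum_mem _ fun d hd => ?_
    have hd' := hf (mem_support_iff.1 hd)
    simp only [Finsupp.weight_apply, Finsupp.sum_fintype, Fin.sum_univ_two, Pi.one_apply,
      smul_eq_mul, mul_one, zero_mul, implies_true] at hd'
    rw [monomial_eq, Finsupp.prod_fintype _ _ (by simp), Fin.prod_univ_two,
      ← smul_eq_C_mul]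
    refine Submodule.smul_mem _ _ (Submodule.subset_span ⟨⟨d 1, by omega⟩, ?_⟩)
    simp only
    congr 2
    omega
  obtain ⟨c, hc⟩ := (Submodule.mem_span_range_iff_exists_fun _).1 this
  refine ⟨fun k => if h : k < m+1 then c ⟨k, h⟩ else 0, ?_⟩
  rw [← hc, Finset.sum_range]
  refine Finset.sum_congr rfl fun i _ => ?_
  beta_reduce
  rw [dif_pos i.2]

theorem symmetric_power_of_standard_rep_irreducible
    (t : ℕ) (ht : t.Prime) (m : ℕ) (hm : m < t)
    (U : Submodule (ZMod t) (MvPolynomial (Fin 2) (ZMod t)))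
    (hU : U ≤ homogeneousSubmodule (Fin 2) (ZMod t) m)
    (hstab : ∀ g : Matrix.SpecialLinearGroup (Fin 2) (ZMod t), ∀ f ∈ U,
      aeval (fun j : Fin 2 => ∑ i : Fin 2,
        (↑g : Matrix (Fin 2) (Fin 2) (ZMod t)) i j • (X i : MvPolynomial (Fin 2) (ZMod t))) f
        ∈ U) :
    U = ⊥ ∨ U = homogeneousSubmodule (Fin 2) (ZMod t) m := by
  haveI := Fact.mk ht
  refine or_iff_not_imp_left.2 fun hne => le_antisymm hU ?_
  obtain ⟨f, hfU, hf0⟩ := Submodule.exists_mem_ne_zero_of_ne_bot hne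
  obtain ⟨c, hc⟩ := repr_aux m f (hU hfU)
  have hX : (X 0 : MvPolynomial (Fin 2) (ZMod t)) ^ m ∈ U := by
    obtain ⟨N, hN, hcN, hmax⟩ : ∃ N ≤ m, c N ≠ 0 ∧ ∀ k ≤ m, N < k → c k = 0 := by
      have hS : ((Finset.range (m+1)).filter (fun k => c k ≠ 0)).Nonempty := by
        by_contra h
        rw [Finset.not_nonempty_iff_eq_empty, Finset.filter_eq_empty_iff] at h
        apply hf0
        rw [hc]
        refine Finset.sum_eq_zero fun k hk => ?_
        rw [not_not.1 (h hk), zero_smul]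
      obtain ⟨N, hN, hmax⟩ := Finset.exists_max_image _ id hS
      simp only [Finset.mem_filter, Finset.mem_range, id] at hN hmax
      refine ⟨N, by omega, hN.2, fun k hk hlt => ?_⟩
      by_contra h
      have := hmax k ⟨by omega, h⟩
      omega
    have key := vdm_aux ht m hm U (fun j => ∑ k ∈ Finset.range (m+1),
      (c k * (k.choose j : ZMod t)) • ((X 0 : MvPolynomial (Fin 2) (ZMod t)) ^ (m-k) *
        (X 0 ^ j * X 1 ^ (k-j)))) ?_ N hN
    · rw [Finset.sum_eq_single N] at key
      · rw [Nat.choose_self, Nat.cast_one, mul_one, Nat.sub_self, pow_zero, mul_one, ← pow_add,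
          Nat.sub_add_cancel hN] at key
        exact (Submodule.smul_mem_iff _ hcN).1 key
      · intro k hk hkN
        rcases lt_or_gt_of_ne hkN with h | h
        · rw [Nat.choose_eq_zero_of_lt h]; simp
        · rw [hmax k (by simpa [Nat.lt_succ_iff] using hk) h]; simp
      · intro h
        exact absurd (Finset.mem_range.2 (by omega)) h
    · intro s
      have h1 := hstab ⟨!![1, s; 0, 1], by simp [Matrix.det_fin_two]⟩ f hfU
      convert h1 using 1
      rw [hc]
      simp only [map_sum, map_smul, map_mul, map_pow, aeval_X, Fin.sum_univ_two]
      simp only [Matrix.of_apply, Matrix.cons_val_zero, Matrix.cons_val_one, Matrix.cons_val',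
        Matrix.cons_val_fin_one, one_smul, zero_smul, add_zero, Finset.smul_sum]
      rw [Finset.sum_comm]
      refine Finset.sum_congr rfl fun k hk => ?_
      have hk' : k + 1 ≤ m + 1 := by simpa [Nat.lt_succ_iff] using hk
      rw [add_pow, Finset.mul_sum, Finset.smul_sum]
      symm
      refine Finset.sum_subset_zero_on_sdiff (Finset.range_mono hk') ?_ ?_
      · intro j hj
        simp only [Finset.mem_sdiff, Finset.mem_range] at hj
        rw [Nat.choose_eq_zero_of_lt (by omega)]; simp
      · intro j hj
        simp only [smul_eq_C_mul, map_mul, map_pow, map_natCast, mul_pow]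
        ring
  have hall := vdm_aux ht m hm U (fun j => 
      (m.choose j : ZMod t) • ((X 0 : MvPolynomial (Fin 2) (ZMod t)) ^ (m-j) * X 1 ^ j)) (by
    intro s
    have h1 := hstab ⟨!![1, 0; s, 1], by simp [Matrix.det_fin_two]⟩ _ hX
    convert h1 using 1
    simp only [map_pow, aeval_X, Fin.sum_univ_two]
    simp only [Matrix.of_apply, Matrix.cons_val_zero, Matrix.cons_val_one, Matrix.cons_val',
        Matrix.cons_val_fin_one, one_smul]
    rw [add_comm (X 0), add_pow]
    refine Finset.sum_congr rfl fun j hj => ?_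
    simp only [smul_eq_C_mul, map_pow, map_natCast, mul_pow]
    ring)
  intro g hg
  obtain ⟨d, rfl⟩ := repr_aux m g hg
  refine Submodule.sum_mem _ fun k hk => Submodule.smul_mem _ _ ?_
  have hk' : k ≤ m := by simpa [Nat.lt_succ_iff] using hk
  refine (Submodule.smul_mem_iff _ ?_).1 (hall k hk')
  rw [Ne, ZMod.natCast_eq_zero_iff]
  intro hd
  have := (Nat.Prime.dvd_factorial ht).1 (hd.trans
    ⟨k.factorial * (m-k).factorial, by rw [← mul_assoc, Nat.choose_mul_factorial_mul_factorial hk']⟩)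
  omega
end

section
/- Let A be a commutative integral domain whose Krull dimension is finite, let B be a commutative ring, and let f : A → B be a surjective ring homomorphism such that the Krull dimension of B is at least the Krull dimension of A. Then f is injective, hence an isomorphism. -/
/-- A surjective ring homomorphism from an integral domain of finite Krull dimension onto a
commutative ring whose Krull dimension is at least as large is injective (hence an
isomorphism). -/
theorem injective_of_surjective_of_krullDim_le {A B : Type*} [CommRing A] [IsDomain A]
    [CommRing B] (hA : ringKrullDim A < ⊤) (f : A →+* B) (hf : Function.Surjective f)
    (hdim : ringKrullDim A ≤ ringKrullDim B) :
    Function.Injective f := by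
  rw [injective_iff_map_eq_zero]
  intro a ha
  by_contra h0
  have h1 := ringKrullDim_succ_le_of_surjective f hf (mem_nonZeroDivisors_of_ne_zero h0) ha
  have h2 : ringKrullDim A + 1 ≤ ringKrullDim A := le_trans (by gcongr) h1
  have h3 : (0 : WithBot ℕ∞) ≤ ringKrullDim A := ringKrullDim_nonneg_of_nontrivial
  generalize ringKrullDim A = d at hA h2 h3
  induction d with
  | bot => simp at h3
  | coe d =>
    induction d with
    | top => exact absurd hA (lt_irrefl _)
    | coe n =>
      have h4 : n + 1 ≤ n := by exact_mod_cast h2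
      omega
end

section
/- Let F be a finite field of characteristic p with Q elements, and let PGL₂(F) denote the quotient of GL₂(F) by its center. If g ∈ PGL₂(F) has order coprime to p, then the order of g divides Q² − 1. -/
/-- If `F` is a finite field of characteristic `p` with `Q` elements and `g ∈ PGL₂(F)` has
order coprime to `p`, then the order of `g` divides `Q² - 1`. -/
theorem orderOf_dvd_card_sq_sub_one_of_coprime
    {F : Type*} [Field F] [Fintype F] (p : ℕ) (hp : p.Prime) [CharP F p]
    (g : Matrix.GeneralLinearGroup (Fin 2) F ⧸
      Subgroup.center (Matrix.GeneralLinearGroup (Fin 2) F))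
    (hg : (orderOf g).Coprime p) :
    orderOf g ∣ Fintype.card F ^ 2 - 1 := by
  classical
  have hinj : Function.Injective (Matrix.GeneralLinearGroup.scalar (R := F) (Fin 2)) := by
    intro a b h
    have h1 := congrArg (fun m : (Matrix.GeneralLinearGroup (Fin 2) F) => (m : Matrix (Fin 2) (Fin 2) F) 0 0) h
    apply Units.ext
    simpa using h1
  have hc : Nat.card (Subgroup.center (Matrix.GeneralLinearGroup (Fin 2) F)) = Fintype.card F - 1 := by
    rw [Matrix.GeneralLinearGroup.center_eq_range_scalar,
      ← Nat.card_congr (MonoidHom.ofInjective hinj).toEquiv, Nat.card_eq_fintype_card,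
      Fintype.card_units]
  have hGL : Nat.card (Matrix.GeneralLinearGroup (Fin 2) F) = (Fintype.card F ^ 2 - 1) * (Fintype.card F ^ 2 - Fintype.card F) := by
    rw [Matrix.card_GL_field]
    simp [Fin.prod_univ_two]
  have hL := Subgroup.card_eq_card_quotient_mul_card_subgroup (Subgroup.center (Matrix.GeneralLinearGroup (Fin 2) F))
  have hq : 1 < Fintype.card F := Fintype.one_lt_card
  have hcard : Nat.card ((Matrix.GeneralLinearGroup (Fin 2) F) ⧸ Subgroup.center (Matrix.GeneralLinearGroup (Fin 2) F))
      = (Fintype.card F ^ 2 - 1) * Fintype.card F := by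
    apply Nat.eq_of_mul_eq_mul_right (show 0 < Fintype.card F - 1 by omega)
    rw [hc, hGL] at hL
    rw [← hL, mul_assoc, Nat.mul_sub (Fintype.card F) (Fintype.card F) 1, mul_one,
      sq (Fintype.card F)]
  have hd := orderOf_dvd_natCard g
  rw [hcard] at hd
  haveI : Fact p.Prime := ⟨hp⟩
  obtain ⟨n, -, hn⟩ := FiniteField.card F p
  refine Nat.Coprime.dvd_of_dvd_mul_right ?_ hd
  rw [hn]
  exact hg.pow_right _
end
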